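/- For every integer n ≥ 1 the dual canonical basis elements satisfy B[n,0,0,n]·B[1,0,0,1] = q^{−4n} B[n+1,0,0,n+1] + q^{−4n} B[n,1,1,n] and B[1,0,0,1]·B[n,0,0,n] = q^{−4n} B[n+1,0,0,n+1] + q^{−4n} B[n,1,1,n]; in particular B[1,0,0,1] commutes with B[n,0,0,n], yet their product is a linear combination of two dual canonical basis elements. -/

import Mathlib

noncomputable section

abbrev F : Type := RatFunc ℚ

/-- The deformation parameter `q`. -/
def qq : F := RatFunc.X

/-- The quantum integer `[3] = q² + 1 + q⁻²`. -/
def box3 : F := qq ^ 2 + 1 + (qq⁻¹) ^ 2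

/-- The generators `E₁, E₂` of the free algebra. -/
def gen (i : Fin 2) : FreeAlgebra F (Fin 2) := FreeAlgebra.ι F i

/-- The quantized Serre relations. -/
inductive SerreRel : FreeAlgebra F (Fin 2) → FreeAlgebra F (Fin 2) → Prop
  | rel1 : SerreRel
      (gen 0 ^ 3 * gen 1 - box3 • (gen 0 ^ 2 * gen 1 * gen 0)
        + box3 • (gen 0 * gen 1 * gen 0 ^ 2) - gen 1 * gen 0 ^ 3) 0
  | rel2 : SerreRel
      (gen 1 ^ 3 * gen 0 - box3 • (gen 1 ^ 2 * gen 0 * gen 1)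
        + box3 • (gen 1 * gen 0 * gen 1 ^ 2) - gen 0 * gen 1 ^ 3) 0

/-- `U = U_q(𝔫)`, the free algebra on `E₁, E₂` modulo the quantized Serre relations. -/
abbrev U : Type := RingQuot SerreRel

def E1 : U := RingQuot.mkAlgHom F SerreRel (gen 0)
def E2 : U := RingQuot.mkAlgHom F SerreRel (gen 1)

/-- `A = (1/(q+q⁻¹))(E₂E₁ − q⁻²E₁E₂)`. -/
def Aelt : U := (qq + qq⁻¹)⁻¹ • (E2 * E1 - (qq⁻¹) ^ 2 • (E1 * E2))

def v0 : U := E1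
def v1 : U := Aelt * v0 - v0 * Aelt
def v2 : U := Aelt * v1 - v1 * Aelt
def v3 : U := Aelt * v2 - v2 * Aelt

/-- `uᵢ = (1 − q⁻²)⁻²ⁱ vᵢ`. -/
def u0 : U := v0
def u1 : U := ((1 - (qq⁻¹) ^ 2)⁻¹) ^ 2 • v1
def u2 : U := ((1 - (qq⁻¹) ^ 2)⁻¹) ^ 4 • v2
def u3 : U := ((1 - (qq⁻¹) ^ 2)⁻¹) ^ 6 • v3

/-- `p₁ = u₃u₁ − q²u₂²`. -/
def p1 : U := u3 * u1 - qq ^ 2 • u2 ^ 2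
/-- `p₀ = u₂u₀ − q²u₁²`. -/
def p0 : U := u2 * u0 - qq ^ 2 • u1 ^ 2

/-- `S`, the subalgebra of `U` generated by `u₀, u₁, u₂, u₃`. -/
abbrev Sgen : Subalgebra F U := Algebra.adjoin F ({u0, u1, u2, u3} : Set U)

def us0 : Sgen := ⟨u0, Algebra.subset_adjoin (by simp)⟩
def us1 : Sgen := ⟨u1, Algebra.subset_adjoin (by simp)⟩
def us2 : Sgen := ⟨u2, Algebra.subset_adjoin (by simp)⟩
def us3 : Sgen := ⟨u3, Algebra.subset_adjoin (by simp)⟩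

/-- `p₁ = u₃u₁ − q²u₂²` as an element of `S`. -/
def ps1 : Sgen := us3 * us1 - qq ^ 2 • us2 ^ 2
/-- `p₀ = u₂u₀ − q²u₁²` as an element of `S`. -/
def ps0 : Sgen := us2 * us0 - qq ^ 2 • us1 ^ 2

/-- Index quadruples `a = (a₃, a₂, a₁, a₀)`. -/
abbrev Idx : Type := ℕ × ℕ × ℕ × ℕ

/-- The PBW monomial `u₃^{a₃}u₂^{a₂}u₁^{a₁}u₀^{a₀}`. -/
def mon (a : Idx) : Sgen := us3 ^ a.1 * us2 ^ a.2.1 * us1 ^ a.2.2.1 * us0 ^ a.2.2.2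

/-- `b(a) = C(a₃,2)+C(a₂,2)+C(a₁,2)+C(a₀,2)`. -/
def bexp (a : Idx) : ℕ :=
  Nat.choose a.1 2 + Nat.choose a.2.1 2 + Nat.choose a.2.2.1 2 + Nat.choose a.2.2.2 2

/-- The dual PBW basis element `E[a] = q^{b(a)} u₃^{a₃}u₂^{a₂}u₁^{a₁}u₀^{a₀}`. -/
def Ee (a : Idx) : Sgen := qq ^ bexp a • mon a

/-- `N(a) = (a₃+a₂+a₁+a₀)² − 7a₃ − 5a₂ − 3a₁ − a₀`. -/
def Nnum (a : Idx) : ℤ :=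
  ((a.1 : ℤ) + a.2.1 + a.2.2.1 + a.2.2.2) ^ 2
    - 7 * a.1 - 5 * a.2.1 - 3 * a.2.2.1 - a.2.2.2

/-- `a ⊴ b` iff `b − a ∈ ℕ·(−1,2,−1,0) + ℕ·(0,−1,2,−1)`. -/
def tri (a b : Idx) : Prop :=
  ∃ s r : ℕ,
    (b.1 : ℤ) = a.1 - s ∧
    (b.2.1 : ℤ) = a.2.1 + 2 * s - r ∧
    (b.2.2.1 : ℤ) = a.2.2.1 - s + 2 * r ∧
    (b.2.2.2 : ℤ) = a.2.2.2 - r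

/-- `S(a) = {b ∈ ℕ⁴ : a ⊴ b and a ≠ b}`. -/
def Sset (a : Idx) : Set Idx := {b | tri a b ∧ a ≠ b}

/-- Condition (i): `B[a] − E[a] ∈ Σ_{b ∈ S(a)} qℤ[q]·E[b]`. -/
def cond1 (B : Idx → Sgen) (a : Idx) : Prop :=
  ∃ φ : Idx →₀ Polynomial ℤ,
    (↑φ.support : Set Idx) ⊆ Sset a ∧
    B a - Ee a =
      φ.sum fun b p => (qq * Polynomial.eval₂ (Int.castRingHom F) qq p) • Ee b

/-- Hypotheses on the bar involution of coefficients `bar : q ↦ q⁻¹` and on the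
anti-automorphism `σ` of `S`: `σ` is an additive, anti-multiplicative bijection with
`σ(c(q)·x) = c(q⁻¹)·σ(x)` and `σ(uᵢ) = q^{2i}uᵢ`. -/
def SigmaHyp (bar : F →+* F) (σ : Sgen → Sgen) : Prop :=
  bar qq = qq⁻¹ ∧
  Function.Bijective σ ∧
  (∀ x y : Sgen, σ (x + y) = σ x + σ y) ∧
  (∀ x y : Sgen, σ (x * y) = σ y * σ x) ∧
  (∀ (c : F) (x : Sgen), σ (c • x) = bar c • σ x) ∧
  σ us0 = us0 ∧ σ us1 = qq ^ 2 • us1 ∧ σ us2 = qq ^ 4 • us2 ∧ σ us3 = qq ^ 6 • us3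

/-- The defining properties of the dual canonical basis `B`: for every `a ∈ ℕ⁴`,
`B[a] − E[a] ∈ Σ_{b ∈ S(a)} qℤ[q]·E[b]` and `σ(B[a]) = q^{−N(a)}B[a]`. -/
def DCB (bar : F →+* F) (σ : Sgen → Sgen) (B : Idx → Sgen) : Prop :=
  ∀ a : Idx, cond1 B a ∧ σ (B a) = qq ^ (-Nnum a) • B a

/-- Extension of `B` to integer quadruples by the convention that `B[a] = 0` whenever
some coordinate of `a` is negative. -/
def Bz (B : Idx → Sgen) (a : ℤ × ℤ × ℤ × ℤ) : Sgen :=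
  if 0 ≤ a.1 ∧ 0 ≤ a.2.1 ∧ 0 ≤ a.2.2.1 ∧ 0 ≤ a.2.2.2 then
    B (a.1.toNat, a.2.1.toNat, a.2.2.1.toNat, a.2.2.2.toNat)
  else 0

set_option linter.all false

section GenericAlg

structure KRel {K A : Type*} [Field K] [Ring A] [Algebra K A] (q : K) (a b c d : A) : Prop where
  hq : q ≠ 0
  ab : a * b = (q⁻¹) ^ 2 • (b * a)
  bc : b * c = (q⁻¹) ^ 2 • (c * b)
  cd : c * d = (q⁻¹) ^ 2 • (d * c)
  ac : a * c = (q⁻¹) ^ 2 • (c * a) + ((q⁻¹) ^ 2 - 1) • (b * b)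
  bd : b * d = (q⁻¹) ^ 2 • (d * b) + ((q⁻¹) ^ 2 - 1) • (c * c)
  ad : a * d = (q⁻¹) ^ 2 • (d * a) + ((q⁻¹) ^ 4 - 1) • (c * b)

variable {K A : Type*} [Field K] [Ring A] [Algebra K A] {q : K} {a b c d : A}

theorem mul_left_of {x y r : A} (h : x * y = r) (t : A) : x * (y * t) = r * t := by
  rw [← mul_assoc, h]

/-- normal-form elements -/
def gp1 (q : K) (b c d : A) : A := d * b - q ^ 2 • c ^ 2
def gp0 (q : K) (a b c : A) : A := c * a - q ^ 2 • b ^ 2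
def gz (q : K) (a b c d : A) : A := d * a - q ^ 2 • (c * b)
def gf (q : K) (a b c d : A) : A := (q⁻¹) ^ 2 • (gp1 q b c d * gp0 q a b c)

namespace KRel

theorem p1_a (h : KRel q a b c d) : a * gp1 q b c d = q ^ (-4 : ℤ) • (gp1 q b c d * a) := by
  have hq := h.hq
  simp only [gp1, pow_two, mul_sub, sub_mul, mul_add, add_mul, mul_assoc, smul_mul_assoc,
    mul_smul_comm, h.ab, h.bc, h.cd, h.ac, h.bd, h.ad, mul_left_of h.ab, mul_left_of h.bc,
    mul_left_of h.cd, mul_left_of h.ac, mul_left_of h.bd, mul_left_of h.ad]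
  match_scalars <;> field_simp <;> ring

theorem p1_b (h : KRel q a b c d) : b * gp1 q b c d = q ^ (-2 : ℤ) • (gp1 q b c d * b) := by
  have hq := h.hq
  simp only [gp1, pow_two, mul_sub, sub_mul, mul_add, add_mul, mul_assoc, smul_mul_assoc,
    mul_smul_comm, h.ab, h.bc, h.cd, h.ac, h.bd, h.ad, mul_left_of h.ab, mul_left_of h.bc,
    mul_left_of h.cd, mul_left_of h.ac, mul_left_of h.bd, mul_left_of h.ad]
  match_scalars <;> field_simp <;> ring

theorem p1_c (h : KRel q a b c d) : c * gp1 q b c d = q ^ (0 : ℤ) • (gp1 q b c d * c) := by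
  have hq := h.hq
  simp only [gp1, pow_two, mul_sub, sub_mul, mul_add, add_mul, mul_assoc, smul_mul_assoc,
    mul_smul_comm, h.ab, h.bc, h.cd, h.ac, h.bd, h.ad, mul_left_of h.ab, mul_left_of h.bc,
    mul_left_of h.cd, mul_left_of h.ac, mul_left_of h.bd, mul_left_of h.ad]
  match_scalars <;> field_simp <;> ring

theorem p1_d (h : KRel q a b c d) : d * gp1 q b c d = q ^ (2 : ℤ) • (gp1 q b c d * d) := by
  have hq := h.hq
  simp only [gp1, pow_two, mul_sub, sub_mul, mul_add, add_mul, mul_assoc, smul_mul_assoc,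
    mul_smul_comm, h.ab, h.bc, h.cd, h.ac, h.bd, h.ad, mul_left_of h.ab, mul_left_of h.bc,
    mul_left_of h.cd, mul_left_of h.ac, mul_left_of h.bd, mul_left_of h.ad]
  match_scalars <;> field_simp <;> ring

theorem p0_a (h : KRel q a b c d) : a * gp0 q a b c = q ^ (-2 : ℤ) • (gp0 q a b c * a) := by
  have hq := h.hq
  simp only [gp0, pow_two, mul_sub, sub_mul, mul_add, add_mul, mul_assoc, smul_mul_assoc,
    mul_smul_comm, h.ab, h.bc, h.cd, h.ac, h.bd, h.ad, mul_left_of h.ab, mul_left_of h.bc,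
    mul_left_of h.cd, mul_left_of h.ac, mul_left_of h.bd, mul_left_of h.ad]
  match_scalars <;> field_simp <;> ring

theorem p0_b (h : KRel q a b c d) : b * gp0 q a b c = q ^ (0 : ℤ) • (gp0 q a b c * b) := by
  have hq := h.hq
  simp only [gp0, pow_two, mul_sub, sub_mul, mul_add, add_mul, mul_assoc, smul_mul_assoc,
    mul_smul_comm, h.ab, h.bc, h.cd, h.ac, h.bd, h.ad, mul_left_of h.ab, mul_left_of h.bc,
    mul_left_of h.cd, mul_left_of h.ac, mul_left_of h.bd, mul_left_of h.ad]
  match_scalars <;> field_simp <;> ring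

theorem p0_c (h : KRel q a b c d) : c * gp0 q a b c = q ^ (2 : ℤ) • (gp0 q a b c * c) := by
  have hq := h.hq
  simp only [gp0, pow_two, mul_sub, sub_mul, mul_add, add_mul, mul_assoc, smul_mul_assoc,
    mul_smul_comm, h.ab, h.bc, h.cd, h.ac, h.bd, h.ad, mul_left_of h.ab, mul_left_of h.bc,
    mul_left_of h.cd, mul_left_of h.ac, mul_left_of h.bd, mul_left_of h.ad]
  match_scalars <;> field_simp <;> ring

theorem p0_d (h : KRel q a b c d) : d * gp0 q a b c = q ^ (4 : ℤ) • (gp0 q a b c * d) := by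
  have hq := h.hq
  simp only [gp0, pow_two, mul_sub, sub_mul, mul_add, add_mul, mul_assoc, smul_mul_assoc,
    mul_smul_comm, h.ab, h.bc, h.cd, h.ac, h.bd, h.ad, mul_left_of h.ab, mul_left_of h.bc,
    mul_left_of h.cd, mul_left_of h.ac, mul_left_of h.bd, mul_left_of h.ad]
  match_scalars <;> field_simp <;> ring

theorem z_d (h : KRel q a b c d) : gz q a b c d * d =
    (q⁻¹) ^ 2 • (d * gz q a b c d) + ((q⁻¹) ^ 2 - 1) • (c * gp1 q b c d) := by
  have hq := h.hq
  simp only [gp1, gz, pow_two, mul_sub, sub_mul, mul_add, add_mul, mul_assoc, smul_mul_assoc,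
    mul_smul_comm, h.ab, h.bc, h.cd, h.ac, h.bd, h.ad, mul_left_of h.ab, mul_left_of h.bc,
    mul_left_of h.cd, mul_left_of h.ac, mul_left_of h.bd, mul_left_of h.ad]
  match_scalars <;> field_simp <;> ring

theorem base2 (h : KRel q a b c d) : gz q a b c d * gz q a b c d - gf q a b c d =
    (q⁻¹) ^ 2 • ((d * gz q a b c d - q ^ 2 • (c * gp1 q b c d)) * a)
     - q ^ 4 • (gp0 q a b c * d * b) := by
  have hq := h.hq
  simp only [gp1, gp0, gz, gf, pow_two, mul_sub, sub_mul, mul_add, add_mul, mul_assoc, smul_mul_assoc,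
    mul_smul_comm, h.ab, h.bc, h.cd, h.ac, h.bd, h.ad, mul_left_of h.ab, mul_left_of h.bc,
    mul_left_of h.cd, mul_left_of h.ac, mul_left_of h.bd, mul_left_of h.ad]
  match_scalars <;> field_simp <;> ring

theorem base3 (h : KRel q a b c d) :
    gz q a b c d * (d * gz q a b c d - q ^ 2 • (c * gp1 q b c d)) =
    (q⁻¹) ^ 2 • ((d * gz q a b c d - q ^ 2 • (c * gp1 q b c d)) * gz q a b c d
      - d * gf q a b c d) + (q⁻¹) ^ 4 • (d * gf q a b c d) := by
  have hq := h.hq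
  simp only [gp1, gp0, gz, gf, pow_two, mul_sub, sub_mul, mul_add, add_mul, mul_assoc,
    smul_mul_assoc,
    mul_smul_comm, h.ab, h.bc, h.cd, h.ac, h.bd, h.ad, mul_left_of h.ab, mul_left_of h.bc,
    mul_left_of h.cd, mul_left_of h.ac, mul_left_of h.bd, mul_left_of h.ad]
  match_scalars <;> field_simp <;> ring

end KRel

/-- `x` and `y` commute up to a power of `q`. -/
def QC (q : K) (k : ℤ) (x y : A) : Prop := x * y = q ^ k • (y * x)

theorem QC.mul_left (hq : q ≠ 0) {k l : ℤ} {x x' y : A} (h : QC q k x y) (h' : QC q l x' y) :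
    QC q (k + l) (x * x') y := by
  unfold QC at *
  rw [mul_assoc, h', mul_smul_comm, ← mul_assoc, h, smul_mul_assoc, smul_smul, mul_assoc,
    zpow_add₀ hq, mul_comm]

theorem QC.mul_right (hq : q ≠ 0) {k l : ℤ} {x y y' : A} (h : QC q k x y) (h' : QC q l x y') :
    QC q (k + l) x (y * y') := by
  unfold QC at *
  rw [← mul_assoc, h, smul_mul_assoc, mul_assoc, h', mul_smul_comm, smul_smul, mul_assoc,
    zpow_add₀ hq]

theorem QC.smul_left {k : ℤ} {x y : A} (h : QC q k x y) (r : K) : QC q k (r • x) y := by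
  unfold QC at *
  rw [smul_mul_assoc, h, mul_smul_comm, smul_comm]

theorem QC.smul_right {k : ℤ} {x y : A} (h : QC q k x y) (r : K) : QC q k x (r • y) := by
  unfold QC at *
  rw [smul_mul_assoc, mul_smul_comm, h, smul_comm]

theorem QC.sub_left {k : ℤ} {x x' y : A} (h : QC q k x y) (h' : QC q k x' y) :
    QC q k (x - x') y := by
  unfold QC at *
  rw [sub_mul, h, h', mul_sub, smul_sub]

theorem QC.pow_left (hq : q ≠ 0) {k : ℤ} {x y : A} (h : QC q k x y) (n : ℕ) :
    QC q (k * n) (x ^ n) y := by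
  induction n with
  | zero => simp [QC]
  | succ n ih =>
    have := ih.mul_left hq h
    rw [← pow_succ] at this
    convert this using 1
    push_cast; ring

theorem QC.pow_right (hq : q ≠ 0) {k : ℤ} {x y : A} (h : QC q k x y) (n : ℕ) :
    QC q (k * n) x (y ^ n) := by
  induction n with
  | zero => simp [QC]
  | succ n ih =>
    have := ih.mul_right hq h
    rw [← pow_succ] at this
    convert this using 1
    push_cast; ring

/-- Chebyshev-type sequence. -/
def gx (z f : A) : ℕ → A
  | 0 => 1
  | 1 => z
  | n + 2 => gx z f (n + 1) * z - gx z f n * f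

theorem gx_comm {z f y : A} (hz : Commute z y) (hf : Commute f y) (n : ℕ) :
    Commute (gx z f n) y := by
  induction n using Nat.twoStepInduction with
  | zero => exact Commute.one_left y
  | one => exact hz
  | more n h1 h2 => exact (h2.mul_left hz).sub_left (h1.mul_left hf)

/-- `gy n` is the cluster variable of index `(n+1,0,0,n)`. -/
def gy (q : K) (a b c d : A) : ℕ → A
  | 0 => d
  | n + 1 => d * gx (gz q a b c d) (gf q a b c d) (n + 1)
      - q ^ 2 • (c * (gp1 q b c d * gx (gz q a b c d) (gf q a b c d) n))

def gw (q : K) (a b c d : A) : ℕ → A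
  | 0 => (q⁻¹) ^ 2 • c
  | n + 1 => gp0 q a b c * gy q a b c d n

namespace KRel

theorem p0_p1 (h : KRel q a b c d) : QC q (-4) (gp0 q a b c) (gp1 q b c d) := by
  have h1 : QC q (0 + -4) (c * a) (gp1 q b c d) := QC.mul_left h.hq h.p1_c h.p1_a
  have h2 : QC q (-2 * (2 : ℕ)) (b ^ 2) (gp1 q b c d) := QC.pow_left h.hq h.p1_b 2
  exact QC.sub_left h1 (h2.smul_left _)

theorem p1_p0 (h : KRel q a b c d) : QC q 4 (gp1 q b c d) (gp0 q a b c) := by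
  have := h.p0_p1
  unfold QC at *
  rw [this, smul_smul, ← zpow_add₀ h.hq]
  simp

theorem p1_p1 : QC q 0 (gp1 q b c d) (gp1 q b c d) := by simp [QC]

theorem p0_p0 : QC q 0 (gp0 q a b c) (gp0 q a b c) := by simp [QC]

theorem z_p1 (h : KRel q a b c d) : QC q (-2) (gz q a b c d) (gp1 q b c d) := by
  have h1 : QC q (2 + -4) (d * a) (gp1 q b c d) := QC.mul_left h.hq h.p1_d h.p1_a
  have h2 : QC q (0 + -2) (c * b) (gp1 q b c d) := QC.mul_left h.hq h.p1_c h.p1_b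
  exact QC.sub_left h1 (h2.smul_left _)

theorem z_p0 (h : KRel q a b c d) : QC q 2 (gz q a b c d) (gp0 q a b c) := by
  have h1 : QC q (4 + -2) (d * a) (gp0 q a b c) := QC.mul_left h.hq h.p0_d h.p0_a
  have h2 : QC q (2 + 0) (c * b) (gp0 q a b c) := QC.mul_left h.hq h.p0_c h.p0_b
  exact QC.sub_left h1 (h2.smul_left _)

theorem of_f (h : KRel q a b c d) {k l : ℤ} {x : A} (h1 : QC q k x (gp1 q b c d))
    (h0 : QC q l x (gp0 q a b c)) : QC q (k + l) x (gf q a b c d) :=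
  (h1.mul_right h.hq h0).smul_right _

theorem z_f (h : KRel q a b c d) : Commute (gz q a b c d) (gf q a b c d) := by
  have := h.of_f h.z_p1 h.z_p0
  simpa [QC, Commute, SemiconjBy] using this

theorem x_z (h : KRel q a b c d) (n : ℕ) :
    Commute (gx (gz q a b c d) (gf q a b c d) n) (gz q a b c d) :=
  gx_comm (Commute.refl _) h.z_f.symm n

theorem x_f (h : KRel q a b c d) (n : ℕ) :
    Commute (gx (gz q a b c d) (gf q a b c d) n) (gf q a b c d) :=
  gx_comm h.z_f (Commute.refl _) n

theorem y_f (h : KRel q a b c d) (n : ℕ) : QC q 6 (gy q a b c d n) (gf q a b c d) := by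
  have hd : QC q (2 + 4) d (gf q a b c d) := h.of_f h.p1_d h.p0_d
  have hc : QC q (0 + 2) c (gf q a b c d) := h.of_f h.p1_c h.p0_c
  have hp : QC q (0 + 4) (gp1 q b c d) (gf q a b c d) := h.of_f p1_p1 h.p1_p0
  have hx : ∀ n, QC q 0 (gx (gz q a b c d) (gf q a b c d) n) (gf q a b c d) := fun n => by
    have := (h.x_f n).eq
    simpa [QC] using this
  cases n with
  | zero => exact hd
  | succ n =>
    have e1 := hd.mul_left h.hq (hx (n + 1))
    have e2 := (hc.mul_left h.hq (hp.mul_left h.hq (hx n))).smul_left (q ^ 2)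
    exact QC.sub_left e1 e2

theorem y_rec (n : ℕ) : gy q a b c d (n + 2) =
    gy q a b c d (n + 1) * gz q a b c d - gy q a b c d n * gf q a b c d := by
  cases n with
  | zero =>
    simp only [gy, gx]
    simp only [mul_sub, sub_mul, smul_mul_assoc, mul_assoc, one_mul]
    abel
  | succ n =>
    simp only [gy]
    rw [show gx (gz q a b c d) (gf q a b c d) (n + 1 + 1 + 1) =
      gx (gz q a b c d) (gf q a b c d) (n + 1 + 1) * gz q a b c d
        - gx (gz q a b c d) (gf q a b c d) (n + 1) * gf q a b c d from rfl]
    conv_lhs => rw [show gx (gz q a b c d) (gf q a b c d) (n + 1 + 1) =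
      gx (gz q a b c d) (gf q a b c d) (n + 1) * gz q a b c d
        - gx (gz q a b c d) (gf q a b c d) n * gf q a b c d from rfl]
    conv_rhs => rw [show gx (gz q a b c d) (gf q a b c d) (n + 1 + 1) =
      gx (gz q a b c d) (gf q a b c d) (n + 1) * gz q a b c d
        - gx (gz q a b c d) (gf q a b c d) n * gf q a b c d from rfl]
    simp only [mul_sub, sub_mul, smul_mul_assoc, smul_sub, mul_assoc]
    abel

theorem z_y0 (h : KRel q a b c d) : gz q a b c d * gy q a b c d 0 =
    (q⁻¹) ^ 2 • gy q a b c d 1 + (q⁻¹) ^ 2 • (c * gp1 q b c d) := by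
  have hq := h.hq
  simp only [gy, gx, mul_one]
  rw [h.z_d]
  match_scalars <;> field_simp
  ring

theorem z_y (h : KRel q a b c d) (n : ℕ) : gz q a b c d * gy q a b c d (n + 1) =
    (q⁻¹) ^ 2 • gy q a b c d (n + 2) + (q⁻¹) ^ 4 • (gy q a b c d n * gf q a b c d) := by
  have hq := h.hq
  have hzf := h.z_f.eq
  induction n using Nat.twoStepInduction with
  | zero =>
    rw [y_rec]
    have := h.base3
    simpa only [gy, gx, mul_one, zero_add] using this
  | one =>
    have h1 : gz q a b c d * gy q a b c d 1 =
        (q⁻¹) ^ 2 • gy q a b c d 2 + (q⁻¹) ^ 4 • (gy q a b c d 0 * gf q a b c d) := by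
      rw [y_rec]
      have := h.base3
      simpa only [gy, gx, mul_one, zero_add] using this
    have e : gz q a b c d * gy q a b c d 2 = (gz q a b c d * gy q a b c d 1) * gz q a b c d
        - (gz q a b c d * gy q a b c d 0) * gf q a b c d := by
      rw [y_rec 0]; simp only [mul_sub, mul_assoc, zero_add]
    have e3 := y_rec (q := q) (a := a) (b := b) (c := c) (d := d) 1
    have e1 : gy q a b c d 1 * gf q a b c d = gy q a b c d 0 * gf q a b c d * gz q a b c d
        - q ^ 2 • (c * gp1 q b c d * gf q a b c d) := by
      simp only [gy, gx, mul_one, zero_add, sub_mul, smul_mul_assoc]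
      rw [mul_assoc, hzf]; simp only [mul_assoc]
    show gz q a b c d * gy q a b c d 2 = (q⁻¹) ^ 2 • gy q a b c d 3
      + (q⁻¹) ^ 4 • (gy q a b c d 1 * gf q a b c d)
    rw [e, h1, h.z_y0, show gy q a b c d 3 = _ from e3]
    simp only [add_mul, smul_mul_assoc, e1]
    match_scalars <;> field_simp <;> ring
  | more n ih1 ih2 =>
    have e : gz q a b c d * gy q a b c d (n + 3) =
        (gz q a b c d * gy q a b c d (n + 2)) * gz q a b c d
        - (gz q a b c d * gy q a b c d (n + 1)) * gf q a b c d := by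
      rw [y_rec (n + 1)]; simp only [mul_sub, mul_assoc]
    have e3 := y_rec (q := q) (a := a) (b := b) (c := c) (d := d) (n + 2)
    have e1 : gy q a b c d (n + 2) * gf q a b c d =
        gy q a b c d (n + 1) * gf q a b c d * gz q a b c d
        - gy q a b c d n * gf q a b c d * gf q a b c d := by
      rw [y_rec, sub_mul, mul_assoc, hzf]; simp only [mul_assoc]
    show gz q a b c d * gy q a b c d (n + 3) = (q⁻¹) ^ 2 • gy q a b c d (n + 4)
      + (q⁻¹) ^ 4 • (gy q a b c d (n + 2) * gf q a b c d)
    rw [e, show gz q a b c d * gy q a b c d (n + 2) = _ from ih2, ih1,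
      show gy q a b c d (n + 4) = _ from e3]
    simp only [add_mul, smul_mul_assoc, e1]
    match_scalars <;> field_simp <;> ring

theorem z_w (h : KRel q a b c d) (n : ℕ) : gz q a b c d * gw q a b c d (n + 1) =
    gw q a b c d (n + 2) + gf q a b c d * gw q a b c d n := by
  have hq := h.hq
  have hzp : gz q a b c d * gp0 q a b c = q ^ (2 : ℤ) • (gp0 q a b c * gz q a b c d) := h.z_p0
  cases n with
  | zero =>
    have e1 : gp0 q a b c * gp1 q b c d = q ^ (-4 : ℤ) • (gp1 q b c d * gp0 q a b c) := h.p0_p1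
    have e2 : c * gp1 q b c d = gp1 q b c d * c := by simpa using h.p1_c
    simp only [gw, zero_add]
    rw [← mul_assoc, hzp, smul_mul_assoc, mul_assoc, h.z_y0, e2, gf, mul_add, mul_smul_comm,
      mul_smul_comm, ← mul_assoc, e1]
    simp only [smul_mul_assoc, mul_smul_comm]
    match_scalars <;> field_simp
  | succ n =>
    have e1 : QC q 2 (gp0 q a b c * gy q a b c d n) (gf q a b c d) := by
      have : QC q (-4 + 0 + 6) (gp0 q a b c * gy q a b c d n) (gf q a b c d) :=
        (h.of_f h.p0_p1 p0_p0).mul_left hq (h.y_f n)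
      exact this
    unfold QC at e1
    simp only [gw]
    rw [← mul_assoc, hzp, smul_mul_assoc, mul_assoc, h.z_y, mul_add, mul_smul_comm,
      mul_smul_comm, ← mul_assoc _ (gy q a b c d n), e1]
    match_scalars <;> field_simp

theorem x_eq (h : KRel q a b c d) (n : ℕ) : gx (gz q a b c d) (gf q a b c d) (n + 1) =
    q ^ (-2 * n : ℤ) • (gy q a b c d n * a) - q ^ 4 • (gw q a b c d n * b) := by
  have hq := h.hq
  induction n using Nat.twoStepInduction with
  | zero =>
    simp only [gx, gy, gw, gz, smul_mul_assoc]
    match_scalars <;> field_simp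
    simp
  | one =>
    have := h.base2
    simp only [gx, gy, gw, mul_one, one_mul, zero_add]
    rw [this]
    congr 2
    simp [zpow_neg]
  | more n ih1 ih2 =>
    have e : gx (gz q a b c d) (gf q a b c d) (n + 3) =
        gz q a b c d * gx (gz q a b c d) (gf q a b c d) (n + 2)
          - gf q a b c d * gx (gz q a b c d) (gf q a b c d) (n + 1) := by
      rw [← (h.x_z (n + 2)).eq, ← (h.x_f (n + 1)).eq]; rfl
    have hy : gy q a b c d n * gf q a b c d = q ^ (6 : ℤ) • (gf q a b c d * gy q a b c d n) :=
      h.y_f n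
    show gx (gz q a b c d) (gf q a b c d) (n + 3) = _
    rw [e, show gx (gz q a b c d) (gf q a b c d) (n + 2) = _ from ih2, ih1]
    simp only [mul_sub, mul_smul_comm]
    rw [← mul_assoc, ← mul_assoc, h.z_y, h.z_w, hy]
    simp only [add_mul, smul_mul_assoc, mul_assoc]
    have ez : q ^ (-2 * ((n + 2 : ℕ) : ℤ)) = q ^ (-2 * (n : ℤ)) * (q⁻¹) ^ 4 := by
      rw [← zpow_natCast, inv_zpow', ← zpow_add₀ hq]; congr 1; push_cast; ring
    have ez1 : q ^ (-2 * ((n + 1 : ℕ) : ℤ)) = q ^ (-2 * (n : ℤ)) * (q⁻¹) ^ 2 := by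
      rw [← zpow_natCast, inv_zpow', ← zpow_add₀ hq]; congr 1; push_cast; ring
    rw [ez, ez1]
    generalize q ^ (-2 * (n : ℤ)) = Q
    match_scalars <;> field_simp <;> ring

end KRel
end GenericAlg

section Lattice

variable {K A : Type*} [Field K] [Ring A] [Algebra K A] {q : K} {a b c d : A}

/-- Rescaled PBW monomials. -/
def gE (q : K) (a b c d : A) (i : Idx) : A :=
  q ^ bexp i • (d ^ i.1 * c ^ i.2.1 * b ^ i.2.2.1 * a ^ i.2.2.2)

theorem gE_def (k l m n : ℕ) : gE q a b c d (k, l, m, n) =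
    q ^ (k.choose 2 + l.choose 2 + m.choose 2 + n.choose 2) •
      (d ^ k * c ^ l * b ^ m * a ^ n) := rfl

theorem choose_two_succ (k : ℕ) : (k + 1).choose 2 = k.choose 2 + k := by
  rw [Nat.choose_succ_succ' k 1]; simp; ring

theorem smul_eq_of {x : A} (hq : q ≠ 0) {m n : ℤ} (h : m = n) : q ^ m • x = q ^ n • x := by
  rw [h]

namespace KRel

theorem qcd (h : KRel q a b c d) : QC q (-2) c d := by
  unfold QC; rw [h.cd, zpow_neg, inv_pow]; norm_cast

theorem qab (h : KRel q a b c d) : QC q (-2) a b := by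
  unfold QC; rw [h.ab, zpow_neg, inv_pow]; norm_cast

theorem d_E (h : KRel q a b c d) (k l m n : ℕ) : d * gE q a b c d (k, l, m, n) =
    q ^ (-k : ℤ) • gE q a b c d (k + 1, l, m, n) := by
  simp only [gE_def, choose_two_succ, mul_smul_comm, smul_smul, ← zpow_natCast,
    ← zpow_add₀ h.hq]
  rw [pow_succ' d k]
  simp only [mul_assoc]
  exact smul_eq_of h.hq (by push_cast; ring)

theorem E_a (h : KRel q a b c d) (k l m n : ℕ) : gE q a b c d (k, l, m, n) * a =
    q ^ (-n : ℤ) • gE q a b c d (k, l, m, n + 1) := by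
  simp only [gE_def, choose_two_succ, smul_mul_assoc, smul_smul, ← zpow_natCast,
    ← zpow_add₀ h.hq]
  rw [pow_succ a n]
  simp only [mul_assoc]
  exact smul_eq_of h.hq (by push_cast; ring)

theorem c_E (h : KRel q a b c d) (k l m n : ℕ) : c * gE q a b c d (k, l, m, n) =
    q ^ (-2 * k - l : ℤ) • gE q a b c d (k, l + 1, m, n) := by
  have e : c * d ^ k = q ^ (-2 * k : ℤ) • (d ^ k * c) := h.qcd.pow_right h.hq k
  simp only [gE_def, choose_two_succ, mul_smul_comm, ← mul_assoc, e]
  simp only [smul_mul_assoc, smul_smul, ← zpow_natCast, ← zpow_add₀ h.hq]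
  rw [pow_succ' c l]
  simp only [mul_assoc]
  exact smul_eq_of h.hq (by push_cast; ring)

theorem E_b (h : KRel q a b c d) (k l m n : ℕ) : gE q a b c d (k, l, m, n) * b =
    q ^ (-2 * n - m : ℤ) • gE q a b c d (k, l, m + 1, n) := by
  have e : a ^ n * b = q ^ (-2 * n : ℤ) • (b * a ^ n) := h.qab.pow_left h.hq n
  simp only [gE_def, choose_two_succ, smul_mul_assoc, mul_assoc, e]
  simp only [mul_smul_comm, smul_smul, ← zpow_natCast, ← zpow_add₀ h.hq]
  rw [pow_succ b m]
  simp only [mul_assoc]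
  exact smul_eq_of h.hq (by push_cast; ring)

theorem E_p1 (h : KRel q a b c d) (k l m n : ℕ) :
    gE q a b c d (k, l, m, n) * gp1 q b c d =
    q ^ (-(4 * n + 3 * m + 2 * l + k) : ℤ) • (gE q a b c d (k + 1, l, m + 1, n)
      - q ^ (1 + m + k : ℤ) • gE q a b c d (k, l + 2, m, n)) := by
  have e1 : a ^ n * gp1 q b c d = q ^ (-4 * n : ℤ) • (gp1 q b c d * a ^ n) :=
    QC.pow_left h.hq h.p1_a n
  have e2 : b ^ m * gp1 q b c d = q ^ (-2 * m : ℤ) • (gp1 q b c d * b ^ m) :=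
    QC.pow_left h.hq h.p1_b m
  have e3 : c ^ l * d = q ^ (-2 * l : ℤ) • (d * c ^ l) := h.qcd.pow_left h.hq l
  have e : gE q a b c d (k, l, m, n) * gp1 q b c d =
      q ^ ((k.choose 2 + l.choose 2 + m.choose 2 + n.choose 2 : ℕ) + -2 * m + -4 * n : ℤ) •
        (d ^ k * (c ^ l * gp1 q b c d) * b ^ m * a ^ n) := by
    rw [gE_def, smul_mul_assoc, mul_assoc _ (a ^ n), e1, mul_smul_comm, ← mul_assoc,
      mul_assoc _ (b ^ m), e2, mul_smul_comm, smul_mul_assoc, smul_smul, smul_smul, ← zpow_natCast,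
      ← zpow_add₀ h.hq, ← zpow_add₀ h.hq]
    simp only [mul_assoc]
    exact smul_eq_of h.hq (by ring)
  rw [e, gp1, mul_sub, ← mul_assoc (c ^ l), e3, mul_smul_comm, ← pow_add]
  simp only [mul_sub, sub_mul, smul_sub]
  simp only [gE_def, choose_two_succ, smul_mul_assoc, mul_smul_comm, smul_smul, ← zpow_natCast q,
    ← zpow_add₀ h.hq]
  congr 1
  · rw [pow_succ d k, pow_succ' b m]
    simp only [mul_assoc]
    exact smul_eq_of h.hq (by push_cast; ring)
  · exact smul_eq_of h.hq (by push_cast; ring)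

theorem E_p0 (h : KRel q a b c d) (k l m n : ℕ) :
    gE q a b c d (k, l, m, n) * gp0 q a b c =
    q ^ (-(3 * n + 2 * m + l) : ℤ) • (gE q a b c d (k, l + 1, m, n + 1)
      - q ^ (1 + n + l : ℤ) • gE q a b c d (k, l, m + 2, n)) := by
  have e1 : a ^ n * gp0 q a b c = q ^ (-2 * n : ℤ) • (gp0 q a b c * a ^ n) :=
    QC.pow_left h.hq h.p0_a n
  have e2 : b ^ m * gp0 q a b c = q ^ (0 * m : ℤ) • (gp0 q a b c * b ^ m) :=
    QC.pow_left h.hq h.p0_b m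
  have e3 : a * b ^ m = q ^ (-2 * m : ℤ) • (b ^ m * a) := h.qab.pow_right h.hq m
  have e : gE q a b c d (k, l, m, n) * gp0 q a b c =
      q ^ ((k.choose 2 + l.choose 2 + m.choose 2 + n.choose 2 : ℕ) + -2 * n : ℤ) •
        (d ^ k * c ^ l * (gp0 q a b c * b ^ m) * a ^ n) := by
    rw [gE_def, smul_mul_assoc, mul_assoc _ (a ^ n), e1, mul_smul_comm, ← mul_assoc,
      mul_assoc _ (b ^ m), e2, mul_smul_comm, smul_mul_assoc, smul_smul, smul_smul, ← zpow_natCast,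
      ← zpow_add₀ h.hq, ← zpow_add₀ h.hq]
    simp only [mul_assoc]
    exact smul_eq_of h.hq (by ring)
  rw [e, gp0, sub_mul, mul_assoc c, e3, smul_mul_assoc, ← pow_add, mul_smul_comm, add_comm 2 m]
  simp only [mul_sub, sub_mul, smul_sub]
  simp only [gE_def, choose_two_succ, smul_mul_assoc, mul_smul_comm, smul_smul, ← zpow_natCast q,
    ← zpow_add₀ h.hq]
  congr 1
  · rw [pow_succ c l, pow_succ' a n]
    simp only [mul_assoc]
    exact smul_eq_of h.hq (by push_cast; ring)
  · exact smul_eq_of h.hq (by push_cast; ring)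

theorem flip (hq : q ≠ 0) {k : ℤ} {x y : A} (h : QC q k x y) : QC q (-k) y x := by
  unfold QC at *
  rw [h, smul_smul, ← zpow_add₀ hq]; simp

theorem p1_E (h : KRel q a b c d) (k l m n : ℕ) :
    gp1 q b c d * gE q a b c d (k, l, m, n) =
    q ^ (-(m + 2 * l + 3 * k) : ℤ) • (gE q a b c d (k + 1, l, m + 1, n)
      - q ^ (1 + m + k : ℤ) • gE q a b c d (k, l + 2, m, n)) := by
  have e := (((((QC.pow_left h.hq h.p1_d k).mul_left h.hq (QC.pow_left h.hq h.p1_c l)).mul_left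
    h.hq (QC.pow_left h.hq h.p1_b m)).mul_left h.hq (QC.pow_left h.hq h.p1_a n)).smul_left
    (q ^ bexp (k, l, m, n)))
  have e' := flip h.hq e
  unfold QC at e'
  erw [e', h.E_p1]
  rw [smul_smul, ← zpow_add₀ h.hq]
  exact smul_eq_of h.hq (by push_cast; ring)

theorem p0_E (h : KRel q a b c d) (k l m n : ℕ) :
    gp0 q a b c * gE q a b c d (k, l, m, n) =
    q ^ (-(n + 2 * m + 3 * l + 4 * k) : ℤ) • (gE q a b c d (k, l + 1, m, n + 1)
      - q ^ (1 + n + l : ℤ) • gE q a b c d (k, l, m + 2, n)) := by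
  have e := (((((QC.pow_left h.hq h.p0_d k).mul_left h.hq (QC.pow_left h.hq h.p0_c l)).mul_left
    h.hq (QC.pow_left h.hq h.p0_b m)).mul_left h.hq (QC.pow_left h.hq h.p0_a n)).smul_left
    (q ^ bexp (k, l, m, n)))
  have e' := flip h.hq e
  unfold QC at e'
  erw [e', h.E_p0]
  rw [smul_smul, ← zpow_add₀ h.hq]
  exact smul_eq_of h.hq (by push_cast; ring)

end KRel

/-- The lattice spanned by `q^k E[b]`, `k ≥ j`, `a ⊴ b`. -/
def QLat (q : K) (E : Idx → A) (i : Idx) (j : ℤ) : AddSubgroup A :=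
  AddSubgroup.closure {x | ∃ (b : Idx) (k : ℤ), tri i b ∧ j ≤ k ∧ x = q ^ k • E b}

variable {E : Idx → A} {i i' : Idx} {j : ℤ}

theorem lat_mem {b : Idx} {k : ℤ} (h : tri i b) (hk : j ≤ k) : q ^ k • E b ∈ QLat q E i j :=
  AddSubgroup.subset_closure ⟨b, k, h, hk, rfl⟩

theorem lat_map (hq : q ≠ 0) (T : A →ₗ[K] A) (l : ℤ)
    (h : ∀ b, tri i b → T (E b) ∈ QLat q E i' l) {x : A} (hx : x ∈ QLat q E i j) :
    T x ∈ QLat q E i' (l + j) := by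
  have key : ∀ (k : ℤ) (y : A), j ≤ k → y ∈ QLat q E i' l → q ^ k • y ∈ QLat q E i' (l + j) := by
    intro k y hk hy
    refine AddSubgroup.closure_induction ?_ ?_ ?_ ?_ hy
    · rintro _ ⟨b, k', hb, hk', rfl⟩
      rw [smul_smul, ← zpow_add₀ hq]
      exact lat_mem hb (by omega)
    · rw [smul_zero]; exact zero_mem _
    · intro x y _ _ hx hy; rw [smul_add]; exact add_mem hx hy
    · intro x _ hx; rw [smul_neg]; exact neg_mem hx
  refine AddSubgroup.closure_induction ?_ ?_ ?_ ?_ hx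
  · rintro _ ⟨b, k', hb, hk', rfl⟩
    rw [map_smul]
    exact key _ _ hk' (h b hb)
  · rw [map_zero]; exact zero_mem _
  · intro x y _ _ hx hy; rw [map_add]; exact add_mem hx hy
  · intro x _ hx; rw [map_neg]; exact neg_mem hx

theorem tri_refl (i : Idx) : tri i i := ⟨0, 0, by simp⟩

theorem lat_mono {j' : ℤ} (h : j' ≤ j) : QLat q E i j ≤ QLat q E i j' :=
  AddSubgroup.closure_mono fun _ ⟨b, k, h1, h2, h3⟩ => ⟨b, k, h1, h.trans h2, h3⟩

/-- `x ≡ E[i]` modulo the lattice. -/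
def Good (q : K) (E : Idx → A) (i : Idx) (x : A) : Prop := x - E i ∈ QLat q E i 1

theorem Good.mem0 {x : A} (h : Good q E i x) : x ∈ QLat q E i 0 := by
  have h1 : x - E i ∈ QLat q E i 0 := lat_mono (by norm_num) h
  have h2 : q ^ (0 : ℤ) • E i ∈ QLat q E i 0 := lat_mem (tri_refl i) le_rfl
  rw [zpow_zero, one_smul] at h2
  simpa using add_mem h1 h2

theorem Good.map (hq : q ≠ 0) {x : A} (hx : Good q E i x) (T : A →ₗ[K] A)
    (h : ∀ b, tri i b → T (E b) ∈ QLat q E i' 0) (h0 : Good q E i' (T (E i))) :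
    Good q E i' (T x) := by
  have h1 := lat_map hq T 0 h hx
  rw [map_sub] at h1
  unfold Good at *
  simpa using add_mem h1 h0

end Lattice

section Claims

variable {K A : Type*} [Field K] [Ring A] [Algebra K A] {q : K} {a b c d : A}

theorem lat_pair {E : Idx → A} {i b1 b2 : Idx} {j e l : ℤ}
    (h1 : tri i b1) (h2 : tri i b2) (hk : j ≤ e) (hl : j ≤ l) {x : A}
    (hx : x = q ^ e • E b1 - q ^ l • E b2) : x ∈ QLat q E i j := by
  rw [hx]
  exact sub_mem (lat_mem h1 hk) (lat_mem h2 hl)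

/-- left/right multiplication maps with scaling -/
def sL (r : K) (x : A) : A →ₗ[K] A := r • LinearMap.mulLeft K x
def sR (r : K) (x : A) : A →ₗ[K] A := r • LinearMap.mulRight K x
theorem sL_apply (r : K) (x y : A) : sL r x y = r • (x * y) := rfl
theorem sR_apply (r : K) (x y : A) : sR r x y = r • (y * x) := rfl

namespace KRel

local notation "EE" => gE q a b c d
local notation "XX" => gx (gz q a b c d) (gf q a b c d)
local notation "YY" => gy q a b c d

theorem good_y_succ (h : KRel q a b c d) (n : ℕ)
    (h1 : Good q EE (n + 1, 0, 0, n + 1) (q ^ (2 * (n + 1) * n : ℤ) • XX (n + 1)))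
    (h0 : Good q EE (n, 0, 0, n) (q ^ (2 * n * (n - 1) : ℤ) • XX n)) :
    Good q EE (n + 2, 0, 0, n + 1) (q ^ ((n + 1) * (2 * n + 1) : ℤ) • YY (n + 1)) := by
  have hq := h.hq
  have e1 : Good q EE (n + 2, 0, 0, n + 1)
      (sL (q ^ (n + 1 : ℤ)) d (q ^ (2 * (n + 1) * n : ℤ) • XX (n + 1))) := by
    refine h1.map hq _ ?_ ?_
    · rintro ⟨k, l, m, t⟩ ⟨s, r, hb⟩
      simp only at hb
      rw [sL_apply, h.d_E, smul_smul, ← zpow_add₀ hq]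
      refine lat_mem ⟨s, r, ?_⟩ ?_
      · push_cast; omega
      · push_cast at *; omega
    · rw [sL_apply, h.d_E, smul_smul, ← zpow_add₀ hq]
      unfold Good
      push_cast
      simp
  have e2 : sL (q ^ (5 * n + 3 : ℤ)) (c * gp1 q b c d) (q ^ (2 * n * (n - 1) : ℤ) • XX n)
      ∈ QLat q EE (n + 2, 0, 0, n + 1) 1 := by
    have := lat_map (i' := (n + 2, 0, 0, n + 1)) hq
      (sL (q ^ (5 * n + 3 : ℤ)) (c * gp1 q b c d)) 1 ?_ h0.mem0
    · simpa using this
    · rintro ⟨k, l, m, t⟩ ⟨s, r, hb⟩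
      simp only at hb
      refine lat_pair (b1 := (k + 1, l + 1, m + 1, t)) (b2 := (k, l + 3, m, t)) (e := 1 + r)
        (l := n + 2 + 3 * r - 2 * s)
        ⟨s + 1, r + 1, ?_⟩ ⟨s + 2, r + 1, ?_⟩ ?_ ?_ ?_
      · push_cast; omega
      · push_cast; omega
      · omega
      · push_cast at hb; omega
      · rw [sL_apply, mul_assoc, h.p1_E]
        simp only [mul_smul_comm, mul_sub, h.c_E, smul_sub, smul_smul, ← zpow_add₀ hq]
        congr 1
        · exact smul_eq_of hq (by push_cast at *; omega)
        · exact smul_eq_of hq (by push_cast at *; omega)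
  have e3 : q ^ ((n + 1) * (2 * n + 1) : ℤ) • YY (n + 1) =
      sL (q ^ (n + 1 : ℤ)) d (q ^ (2 * (n + 1) * n : ℤ) • XX (n + 1)) -
      sL (q ^ (5 * n + 3 : ℤ)) (c * gp1 q b c d) (q ^ (2 * n * (n - 1) : ℤ) • XX n) := by
    simp only [gy, sL_apply, mul_smul_comm, smul_sub, smul_smul, ← zpow_natCast,
      ← zpow_add₀ hq, mul_assoc]
    congr 1
    · exact smul_eq_of hq (by push_cast; ring)
    · exact smul_eq_of hq (by push_cast; ring)
  unfold Good at *
  rw [e3, sub_right_comm]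
  exact sub_mem e1 e2

theorem good_x_succ (h : KRel q a b c d) (n : ℕ)
    (h1 : Good q EE (n + 1, 0, 0, n) (q ^ (n * (2 * n - 1) : ℤ) • YY n))
    (h2 : q ^ (2 * (n + 1) * n + 4 : ℤ) • (gw q a b c d n * b) ∈
      QLat q EE (n + 1, 0, 0, n + 1) 1) :
    Good q EE (n + 1, 0, 0, n + 1) (q ^ (2 * (n + 1) * n : ℤ) • XX (n + 1)) := by
  have hq := h.hq
  have e1 : Good q EE (n + 1, 0, 0, n + 1)
      (sR (q ^ (n : ℤ)) a (q ^ (n * (2 * n - 1) : ℤ) • YY n)) := by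
    refine h1.map hq _ ?_ ?_
    · rintro ⟨k, l, m, t⟩ ⟨s, r, hb⟩
      simp only at hb
      rw [sR_apply, h.E_a, smul_smul, ← zpow_add₀ hq]
      refine lat_mem ⟨s, r, ?_⟩ ?_
      · push_cast at *; omega
      · push_cast at *; omega
    · rw [sR_apply, h.E_a, smul_smul, ← zpow_add₀ hq]
      unfold Good
      simp
  have e3 : q ^ (2 * (n + 1) * n : ℤ) • XX (n + 1) =
      sR (q ^ (n : ℤ)) a (q ^ (n * (2 * n - 1) : ℤ) • YY n) -
      q ^ (2 * (n + 1) * n + 4 : ℤ) • (gw q a b c d n * b) := by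
    rw [h.x_eq]
    simp only [sR_apply, smul_mul_assoc, smul_sub, smul_smul, ← zpow_natCast,
      ← zpow_add₀ hq, mul_assoc]
    congr 1
    · exact smul_eq_of hq (by push_cast; ring)
  unfold Good at *
  rw [e3, sub_right_comm]
  exact sub_mem e1 h2

theorem good_w_succ (h : KRel q a b c d) (n : ℕ)
    (h1 : Good q EE (n + 1, 0, 0, n) (q ^ (n * (2 * n - 1) : ℤ) • YY n)) :
    q ^ (2 * (n + 2) * (n + 1) + 4 : ℤ) • (gw q a b c d (n + 1) * b) ∈
      QLat q EE (n + 2, 0, 0, n + 2) 1 := by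
  have hq := h.hq
  have e2 : sR (q ^ (7 * n + 8 : ℤ)) b (sL (1 : K) (gp0 q a b c) (q ^ (n * (2 * n - 1) : ℤ) • YY n))
      ∈ QLat q EE (n + 2, 0, 0, n + 2) 1 := by
    have := lat_map (i' := (n + 2, 0, 0, n + 2)) hq
      (sR (q ^ (7 * n + 8 : ℤ)) b ∘ₗ sL (1 : K) (gp0 q a b c)) 1 ?_ h1.mem0
    · exact this
    · rintro ⟨k, l, m, t⟩ ⟨s, r, hb⟩
      simp only at hb
      refine lat_pair (b1 := (k, l + 1, m + 1, t + 1)) (b2 := (k, l, m + 3, t)) (e := 2 + s)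
        (l := n + 3 + 3 * s - 2 * r)
        ⟨s + 1, r + 1, ?_⟩ ⟨s + 1, r + 2, ?_⟩ ?_ ?_ ?_
      · push_cast at *; omega
      · push_cast at *; omega
      · omega
      · push_cast at hb; omega
      · rw [LinearMap.comp_apply, sL_apply, sR_apply, h.p0_E]
        simp only [smul_mul_assoc, sub_mul, h.E_b, smul_sub, smul_smul, ← zpow_add₀ hq, one_mul]
        congr 1
        · exact smul_eq_of hq (by push_cast at *; omega)
        · exact smul_eq_of hq (by push_cast at *; omega)
  convert e2 using 1
  simp only [gw, sL_apply, sR_apply, smul_mul_assoc, mul_smul_comm, smul_smul, ← zpow_add₀ hq,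
    one_mul, mul_assoc]
  exact smul_eq_of hq (by push_cast; ring)

theorem good_all (h : KRel q a b c d) (n : ℕ) :
    Good q EE (n, 0, 0, n) (q ^ (2 * n * (n - 1) : ℤ) • XX n) ∧
    Good q EE (n + 1, 0, 0, n) (q ^ (n * (2 * n - 1) : ℤ) • YY n) ∧
    q ^ (2 * (n + 1) * n + 4 : ℤ) • (gw q a b c d n * b) ∈
      QLat q EE (n + 1, 0, 0, n + 1) 1 := by
  have hq := h.hq
  induction n with
  | zero =>
    refine ⟨?_, ?_, ?_⟩
    · simp [Good, gx, gE, bexp]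
    · simp [Good, gy, gE, bexp]
    · have : q ^ (2 : ℤ) • EE (0, 1, 1, 0) ∈ QLat q EE (1, 0, 0, 1) 1 :=
        lat_mem ⟨1, 1, by simp⟩ (by norm_num)
      convert this using 1
      simp only [gw, smul_mul_assoc, smul_smul, gE_def]
      simp
      match_scalars
      field_simp
  | succ n ih =>
    have hx := h.good_x_succ n ih.2.1 ih.2.2
    have hy := h.good_y_succ n hx ih.1
    have hw := h.good_w_succ n ih.2.1
    refine ⟨?_, ?_, ?_⟩
    · convert hx using 1
      exact smul_eq_of hq (by push_cast; ring)
    · convert hy using 1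
      exact smul_eq_of hq (by push_cast; ring)
    · convert hw using 1
      exact smul_eq_of hq (by push_cast; ring)

theorem good_xf (h : KRel q a b c d) (n : ℕ) :
    Good q EE (n + 1, 1, 1, n + 1)
      (q ^ (2 * (n + 2) * (n + 1) : ℤ) • (XX n * gf q a b c d)) := by
  have hq := h.hq
  have key : ∀ k l m t s r : ℕ, ((k : ℤ) = n - s ∧ (l : ℤ) = 2 * s - r ∧ (m : ℤ) = - s + 2 * r ∧
      (t : ℤ) = n - r) →
      q ^ (8 * n + 2 : ℤ) • (EE (k, l, m, t) * gp1 q b c d * gp0 q a b c)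
      - EE (k + 1, l + 1, m + 1, t + 1) ∈ QLat q EE (n + 1, 1, 1, n + 1) 1 := by
    intro k l m t s r hb
    have e : q ^ (8 * n + 2 : ℤ) • (EE (k, l, m, t) * gp1 q b c d * gp0 q a b c)
      - EE (k + 1, l + 1, m + 1, t + 1) =
      q ^ (1 + m + k + 3 + t + l : ℤ) • EE (k, l + 2, m + 2, t)
       - q ^ (1 + m + k : ℤ) • EE (k, l + 3, m, t + 1)
       - q ^ (1 + t + l : ℤ) • EE (k + 1, l, m + 3, t) := by
      rw [h.E_p1]
      simp only [smul_mul_assoc, sub_mul, h.E_p0, smul_sub, smul_smul, ← zpow_add₀ hq]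
      rw [show (8 * (n : ℤ) + 2 + (-(4 * t + 3 * m + 2 * l + k) +
        -(3 * t + 2 * ((m + 1 : ℕ) : ℤ) + l))) = 0 by push_cast; omega, zpow_zero, one_smul]
      have e1 : ∀ x y z w w' y' z' : A, y = y' → z = z' → w = w' →
        x - z - (y - w) - x = w' - y' - z' := by
        rintro x y z w w' y' z' rfl rfl rfl; abel
      apply e1
      · exact smul_eq_of hq (by push_cast; omega)
      · exact smul_eq_of hq (by push_cast; omega)
      · exact smul_eq_of hq (by push_cast; omega)
    rw [e]
    refine sub_mem (sub_mem (lat_mem ⟨s + 1, r + 1, ?_⟩ ?_) (lat_mem ⟨s + 1, r, ?_⟩ ?_))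
      (lat_mem ⟨s, r + 1, ?_⟩ ?_)
    all_goals (push_cast; omega)
  have e2 : Good q EE (n + 1, 1, 1, n + 1)
      (sR (q ^ (8 * n + 2 : ℤ)) (gp1 q b c d * gp0 q a b c)
        (q ^ (2 * n * (n - 1) : ℤ) • XX n)) := by
    refine (h.good_all n).1.map hq _ ?_ ?_
    · rintro ⟨k, l, m, t⟩ ⟨s, r, hb⟩
      simp only at hb
      have h1 := lat_mono (j' := 0) (by norm_num) (key k l m t s r (by push_cast at hb; omega))
      have h2 : q ^ (0 : ℤ) • EE (k + 1, l + 1, m + 1, t + 1) ∈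
        QLat q EE (n + 1, 1, 1, n + 1) 0 := lat_mem ⟨s, r, by push_cast at *; omega⟩ le_rfl
      have h3 := add_mem h1 h2
      rw [zpow_zero, one_smul, sub_add_cancel] at h3
      rw [sR_apply, ← mul_assoc]
      exact h3
    · rw [sR_apply, ← mul_assoc]
      exact key n 0 0 n 0 0 (by simp)
  convert e2 using 1
  simp only [gf, sR_apply, smul_mul_assoc, mul_smul_comm, smul_smul, ← zpow_natCast,
    ← zpow_add₀ hq, inv_zpow', mul_assoc]
  exact smul_eq_of hq (by push_cast; ring)

end KRel
end Claims

section Uniq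

variable {K A : Type*} [Field K] [Ring A] [Algebra K A] {q : K} {a b c d : A}

/-- Semilinear anti-multiplicative bijection. -/
structure SH (q : K) (bar : K →+* K) (σ : A → A) : Prop where
  bq : bar q = q⁻¹
  bij : Function.Bijective σ
  add : ∀ x y, σ (x + y) = σ x + σ y
  mul : ∀ x y, σ (x * y) = σ y * σ x
  smul : ∀ (r : K) x, σ (r • x) = bar r • σ x

namespace SH

variable {bar : K →+* K} {σ : A → A}

theorem zero (h : SH q bar σ) : σ 0 = 0 := by
  have := h.add 0 0
  simpa using this

theorem neg (h : SH q bar σ) (x : A) : σ (-x) = -σ x := by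
  have := h.add (-x) x
  rw [neg_add_cancel, h.zero] at this
  exact eq_neg_of_add_eq_zero_left this.symm

theorem sub (h : SH q bar σ) (x y : A) : σ (x - y) = σ x - σ y := by
  rw [sub_eq_add_neg, h.add, h.neg, sub_eq_add_neg]

theorem one (h : SH q bar σ) : σ 1 = 1 := by
  obtain ⟨x, hx⟩ := h.bij.2 1
  have := h.mul x 1
  rw [mul_one, hx, mul_one] at this
  exact this.symm

theorem sum (h : SH q bar σ) {ι : Type*} (s : Finset ι) (g : ι → A) :
    σ (∑ i ∈ s, g i) = ∑ i ∈ s, σ (g i) := by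
  classical
  induction s using Finset.induction_on with
  | empty => simp [h.zero]
  | insert i s hi ih => rw [Finset.sum_insert hi, Finset.sum_insert hi, h.add, ih]

theorem bz (h : SH q bar σ) (k : ℤ) : bar (q ^ k) = q ^ (-k) := by
  rw [map_zpow₀, h.bq, inv_zpow']

end SH

theorem tri_trans {x y z : Idx} (h : tri x y) (h' : tri y z) : tri x z := by
  obtain ⟨s, r, h⟩ := h
  obtain ⟨s', r', h'⟩ := h'
  exact ⟨s + s', r + r', by push_cast; omega, by push_cast; omega, by push_cast; omega,
    by push_cast; omega⟩

/-- height -/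
def ht (x : Idx) : ℕ := x.1 + x.2.2.2

theorem ht_lt {x y : Idx} (h : y ∈ Sset x) : ht y < ht x := by
  obtain ⟨⟨s, r, h1, h2, h3, h4⟩, hne⟩ := h
  obtain ⟨x3, x2, x1, x0⟩ := x
  obtain ⟨y3, y2, y1, y0⟩ := y
  simp only [ht, ne_eq, Prod.mk.injEq] at *
  omega

theorem Sset_trans {x y z : Idx} (h : y ∈ Sset x) (h' : tri y z) : z ∈ Sset x := by
  refine ⟨tri_trans h.1 h', ?_⟩
  rintro rfl
  by_cases e : y = x
  · exact h.2 e.symm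
  · have := ht_lt h
    have := ht_lt (x := y) (y := x) ⟨h', e⟩
    omega

theorem N_tri {x y : Idx} (h : tri x y) : Nnum x = Nnum y := by
  obtain ⟨s, r, h1, h2, h3, h4⟩ := h
  unfold Nnum
  rw [h1, h2, h3, h4]
  ring

/-- generic dual canonical basis data -/
def GB (q : K) (E : Idx → A) (σ : A → A) (B : Idx → A) : Prop :=
  ∀ i : Idx, (∃ φ : Idx →₀ Polynomial ℤ,
    (↑φ.support : Set Idx) ⊆ Sset i ∧
    B i - E i =
      φ.sum fun b p => (q * Polynomial.eval₂ (Int.castRingHom K) q p) • E b) ∧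
    σ (B i) = q ^ (-Nnum i) • B i

variable {bar : K →+* K} {σ : A → A} {E B : Idx → A}

theorem sigma_tri (h : SH q bar σ) (hB : GB q E σ B) (i : Idx) :
    σ (E i) - q ^ (-Nnum i) • E i ∈ Submodule.span K (E '' Sset i) := by
  induction hn : ht i using Nat.strong_induction_on generalizing i with
  | _ n ih =>
  obtain ⟨⟨φ, hφ, he⟩, hs⟩ := hB i
  have e1 : E i = B i - φ.sum fun b p => (q * Polynomial.eval₂ (Int.castRingHom K) q p) • E b := by
    rw [← he]; abel
  have e2 : σ (E i) - q ^ (-Nnum i) • E i = q ^ (-Nnum i) • (B i - E i)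
     - ∑ x ∈ φ.support, bar (q * Polynomial.eval₂ (Int.castRingHom K) q (φ x)) • σ (E x) := by
    conv_lhs => rw [e1, h.sub, hs]
    rw [Finsupp.sum, h.sum]
    simp only [h.smul]
    rw [e1, Finsupp.sum]
    simp only [smul_sub]
    abel
  rw [e2, he]
  refine sub_mem (Submodule.smul_mem _ _ (Submodule.sum_mem _ fun x hx => ?_))
    (Submodule.sum_mem _ fun x hx => ?_)
  · exact Submodule.smul_mem _ _ (Submodule.subset_span ⟨x, hφ hx, rfl⟩)
  · refine Submodule.smul_mem _ _ ?_
    have h1 := ih (ht x) (by rw [← hn]; exact ht_lt (hφ hx)) x rfl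
    have h2 : Submodule.span K (E '' Sset x) ≤ Submodule.span K (E '' Sset i) :=
      Submodule.span_mono (Set.image_mono fun y hy => Sset_trans (hφ hx) hy.1)
    have h3 := add_mem (h2 h1) (Submodule.smul_mem _ (q ^ (-Nnum x))
      (Submodule.subset_span ⟨x, hφ hx, rfl⟩))
    simpa using h3

/-- `qℤ[q]` -/
def Pos (q : K) : AddSubgroup K where
  carrier := {x | ∃ P : Polynomial ℤ, x = q * Polynomial.eval₂ (Int.castRingHom K) q P}
  zero_mem' := ⟨0, by simp⟩
  add_mem' := by
    rintro _ _ ⟨P, rfl⟩ ⟨Q, rfl⟩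
    exact ⟨P + Q, by rw [Polynomial.eval₂_add, mul_add]⟩
  neg_mem' := by
    rintro _ ⟨P, rfl⟩
    exact ⟨-P, by rw [Polynomial.eval₂_neg, mul_neg]⟩

theorem pos_bar (hq : q ≠ 0)
    (hinj : Function.Injective (Polynomial.eval₂ (Int.castRingHom K) q)) (hb : bar q = q⁻¹)
    {x : K} (hx : x ∈ Pos q) (hxb : bar x = x) : x = 0 := by
  obtain ⟨P, rfl⟩ := hx
  rw [map_mul, hb, Polynomial.hom_eval₂, hb,
    show bar.comp (Int.castRingHom K) = Int.castRingHom K from RingHom.ext_int _ _] at hxb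
  have e : Polynomial.eval₂ (Int.castRingHom K) q P.reverse =
      Polynomial.eval₂ (Int.castRingHom K) q⁻¹ P * q ^ P.natDegree := by
    letI : Invertible (q⁻¹) := invertibleOfNonzero (inv_ne_zero hq)
    have := Polynomial.eval₂_reverse_mul_pow (Int.castRingHom K) (q⁻¹) P
    rw [invOf_eq_inv, inv_inv] at this
    rw [← this, mul_assoc, ← mul_pow, inv_mul_cancel₀ hq, one_pow, mul_one]
  have e2 : P.reverse = Polynomial.X ^ (P.natDegree + 2) * P := by
    apply hinj
    rw [e, Polynomial.eval₂_mul, Polynomial.eval₂_X_pow]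
    have : Polynomial.eval₂ (Int.castRingHom K) q⁻¹ P = q * (q *
        Polynomial.eval₂ (Int.castRingHom K) q P) := by
      rw [← hxb]; field_simp
    rw [this]; ring
  have : P = 0 := by
    by_contra hP
    have h1 := Polynomial.reverse_natDegree_le P
    rw [e2, Polynomial.natDegree_mul (by simp) hP, Polynomial.natDegree_X_pow] at h1
    omega
  rw [this]; simp

theorem lat_form {i : Idx} {x : A} (hx : x ∈ QLat q E i 1) :
    ∃ φ : Idx →₀ K, (∀ b ∈ φ.support, tri i b) ∧ (∀ b, φ b ∈ Pos q) ∧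
      x = Finsupp.linearCombination K E φ := by
  classical
  refine AddSubgroup.closure_induction ?_ ?_ ?_ ?_ hx
  · rintro _ ⟨b, k, hb, hk, rfl⟩
    refine ⟨Finsupp.single b (q ^ k), ?_, ?_, ?_⟩
    · intro y hy
      have := Finsupp.support_single_subset hy
      rw [Finset.mem_singleton] at this
      rw [this]; exact hb
    · intro y
      rw [Finsupp.single_apply]
      split_ifs
      · obtain ⟨m, rfl⟩ : ∃ m : ℕ, k = 1 + m := ⟨(k - 1).toNat, by omega⟩
        refine ⟨Polynomial.X ^ m, ?_⟩
        rw [Polynomial.eval₂_X_pow, add_comm, ← pow_succ', ← zpow_natCast]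
        congr 1
      · exact zero_mem _
    · rw [Finsupp.linearCombination_single]
  · exact ⟨0, by simp, fun _ => zero_mem _, by simp⟩
  · rintro x y _ _ ⟨φ, h1, h2, rfl⟩ ⟨ψ, h3, h4, rfl⟩
    refine ⟨φ + ψ, fun b hb => ?_, fun b => add_mem (h2 b) (h4 b), by simp⟩
    rcases Finset.mem_union.1 (Finsupp.support_add hb) with h | h
    · exact h1 b h
    · exact h3 b h
  · rintro x _ ⟨φ, h1, h2, rfl⟩
    exact ⟨-φ, fun b hb => h1 b (by simpa using hb), fun b => neg_mem (h2 b), by simp⟩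

theorem uniq (hq : q ≠ 0)
    (hinj : Function.Injective (Polynomial.eval₂ (Int.castRingHom K) q))
    (hli : LinearIndependent K E) (h : SH q bar σ) (hB : GB q E σ B) {i : Idx} {x : A}
    (hx : x ∈ QLat q E i 1) (hs : σ x = q ^ (-Nnum i) • x) : x = 0 := by
  classical
  obtain ⟨φ, h1, h2, rfl⟩ := lat_form hx
  suffices φ = 0 by rw [this]; simp
  by_contra hne
  obtain ⟨m, hm, hmax⟩ := Finset.exists_max_image φ.support ht
    (Finsupp.support_nonempty_iff.2 hne)
  rw [Finsupp.linearCombination_apply, Finsupp.sum, h.sum, Finset.smul_sum] at hs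
  simp only [h.smul] at hs
  -- each term
  set W := Submodule.span K (E '' {m}ᶜ) with hW
  have hterm : ∀ y ∈ φ.support, bar (φ y) • σ (E y) - q ^ (-Nnum i) • φ y • E y
      - (q ^ (-Nnum i) * (bar (φ y) - φ y)) • E y ∈ W := by
    intro y hy
    have e : bar (φ y) • σ (E y) - q ^ (-Nnum i) • φ y • E y
      - (q ^ (-Nnum i) * (bar (φ y) - φ y)) • E y =
      bar (φ y) • (σ (E y) - q ^ (-Nnum y) • E y) := by
      rw [N_tri (h1 y hy)]
      module
    rw [e]
    refine Submodule.smul_mem _ _ (Submodule.span_mono (Set.image_mono ?_) (sigma_tri h hB y))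
    intro w hw
    have := ht_lt hw
    have := hmax y hy
    rintro rfl
    omega
  have hsum := Submodule.sum_mem W hterm
  rw [Finset.sum_sub_distrib, Finset.sum_sub_distrib, hs, sub_self, zero_sub] at hsum
  have hsum' := neg_mem hsum
  rw [neg_neg, ← Finset.add_sum_erase _ _ hm] at hsum'
  have hrest : ∑ y ∈ φ.support.erase m, (q ^ (-Nnum i) * (bar (φ y) - φ y)) • E y ∈ W :=
    Submodule.sum_mem _ fun y hy => Submodule.smul_mem _ _
      (Submodule.subset_span ⟨y, (Finset.mem_erase.1 hy).1, rfl⟩)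
  have hEm : (q ^ (-Nnum i) * (bar (φ m) - φ m)) • E m ∈ W :=
    (Submodule.add_mem_iff_left W hrest).1 hsum'
  have hnot : E m ∉ W := hli.notMem_span_image (by simp)
  have h0 : q ^ (-Nnum i) * (bar (φ m) - φ m) = 0 := by
    by_contra h0
    exact hnot ((Submodule.smul_mem_iff _ h0).1 hEm)
  have h3 : bar (φ m) = φ m := by
    rcases mul_eq_zero.1 h0 with h | h
    · exact absurd h (zpow_ne_zero _ hq)
    · exact sub_eq_zero.1 h
  exact Finsupp.mem_support_iff.1 hm (pos_bar hq hinj h.bq (h2 m) h3)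

theorem good_B (hq : q ≠ 0) (hB : GB q E σ B) (i : Idx) : Good q E i (B i) := by
  obtain ⟨⟨φ, hφ, he⟩, -⟩ := hB i
  unfold Good
  rw [he]
  refine sum_mem fun y hy => ?_
  have hy' := (hφ hy).1
  generalize φ y = P
  beta_reduce
  induction P using Polynomial.induction_on' with
  | add P Q h1 h2 => rw [Polynomial.eval₂_add, mul_add, add_smul]; exact add_mem h1 h2
  | monomial n r =>
    rw [Polynomial.eval₂_monomial]
    have : (q * ((Int.castRingHom K) r * q ^ n)) • E y = r • (q ^ ((n : ℤ) + 1) • E y) := by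
      rw [← Int.cast_smul_eq_zsmul K, smul_smul, zpow_add₀ hq, zpow_natCast, zpow_one]
      congr 1
      simp; ring
    rw [this]
    exact zsmul_mem (lat_mem hy' (by omega)) _

theorem B_eq (hq : q ≠ 0)
    (hinj : Function.Injective (Polynomial.eval₂ (Int.castRingHom K) q))
    (hli : LinearIndependent K E) (h : SH q bar σ) (hB : GB q E σ B) {i : Idx} {x : A}
    (hx : Good q E i x) (hs : σ x = q ^ (-Nnum i) • x) : B i = x := by
  rw [← sub_eq_zero]
  refine uniq hq hinj hli h hB (i := i) ?_ ?_
  · have := sub_mem (good_B hq hB i) hx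
    simpa using this
  · rw [h.sub, hs, (hB i).2, smul_sub]

end Uniq

section Final

variable {K A : Type*} [Field K] [Ring A] [Algebra K A] {q : K} {a b c d : A}

theorem der_smul (m n : ℕ) (r : K) (t x : A) :
    r ^ m • (t * (r ^ n • x) - (r ^ n • x) * t) = r ^ (m + n) • (t * x - x * t) := by
  rw [mul_smul_comm, smul_mul_assoc, ← smul_sub, smul_smul, ← pow_add]

theorem krel_of_der {t : A} {s : K} (hq : q ≠ 0) (hb : b = s • (t * a - a * t))
    (hc : c = s • (t * b - b * t)) (hd : d = s • (t * c - c * t))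
    (ab : a * b = (q⁻¹) ^ 2 • (b * a)) (bc : b * c = (q⁻¹) ^ 2 • (c * b))
    (cd : c * d = (q⁻¹) ^ 2 • (d * c)) : KRel q a b c d := by
  have leib : ∀ x y : A, s • (t * (x * y) - (x * y) * t) =
      (s • (t * x - x * t)) * y + x * (s • (t * y - y * t)) := by
    intro x y
    rw [smul_mul_assoc, mul_smul_comm, ← smul_add]
    congr 1
    noncomm_ring
  have lin : ∀ (r : K) (x : A), s • (t * (r • x) - (r • x) * t) =
      r • (s • (t * x - x * t)) := by
    intro r x
    rw [mul_smul_comm, smul_mul_assoc, ← smul_sub, smul_comm]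
  have der : ∀ {x y : A}, x = y → s • (t * x - x * t) = s • (t * y - y * t) := by
    rintro x y rfl; rfl
  have linadd : ∀ x y : A, s • (t * (x + y) - (x + y) * t) =
      s • (t * x - x * t) + s • (t * y - y * t) := by
    intro x y
    rw [← smul_add]; congr 1; noncomm_ring
  have e1 := der ab
  rw [leib, lin, leib, ← hb, ← hc] at e1
  have ac : a * c = (q⁻¹) ^ 2 • (c * a) + ((q⁻¹) ^ 2 - 1) • (b * b) := by
    rw [← sub_eq_zero] at e1 ⊢
    rw [← e1]; module
  have e2 := der bc
  rw [leib, lin, leib, ← hc, ← hd] at e2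
  have bd : b * d = (q⁻¹) ^ 2 • (d * b) + ((q⁻¹) ^ 2 - 1) • (c * c) := by
    rw [← sub_eq_zero] at e2 ⊢
    rw [← e2]; module
  have e3 := der ac
  rw [linadd, leib, lin, lin, leib, leib, ← hb, ← hc, ← hd, bc] at e3
  have ad : a * d = (q⁻¹) ^ 2 • (d * a) + ((q⁻¹) ^ 4 - 1) • (c * b) := by
    rw [← sub_eq_zero] at e3 ⊢
    rw [← e3]; module
  exact ⟨hq, ab, bc, cd, ac, bd, ad⟩

variable {bar : K →+* K} {σ : A → A} {E B : Idx → A}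

theorem E_sigma (hB : GB q E σ B) {i : Idx} (hi : Sset i = ∅) :
    σ (E i) = q ^ (-Nnum i) • E i := by
  obtain ⟨⟨φ, hφ, he⟩, hs⟩ := hB i
  have h0 : φ = 0 := by
    rw [hi] at hφ
    rw [← Finsupp.support_eq_empty]
    exact Finset.coe_eq_empty.1 (Set.subset_empty_iff.1 hφ)
  rw [h0, Finsupp.sum_zero_index, sub_eq_zero] at he
  rw [← he, hs]

theorem rel_of (hq : q ≠ 0) {x y : A} {m n k : ℕ} (hN : k + 2 = m + n)
    (h : (q ^ m • x) * (q ^ n • y) = q ^ k • (y * x)) :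
    x * y = (q⁻¹) ^ 2 • (y * x) := by
  rw [smul_mul_assoc, mul_smul_comm, smul_smul, ← pow_add, ← hN] at h
  have := congrArg (fun w => (q ^ (k + 2))⁻¹ • w) h
  simp only [smul_smul] at this
  rw [inv_mul_cancel₀ (pow_ne_zero _ hq), one_smul] at this
  rw [this]
  congr 1
  rw [pow_add]
  field_simp

theorem three_rel (hq : q ≠ 0) (h : SH q bar σ) (hB : GB q (gE q a b c d) σ B)
    (ha : σ a = a) (hb : σ b = q ^ 2 • b) (hc : σ c = q ^ 4 • c) (hd : σ d = q ^ 6 • d) :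
    a * b = (q⁻¹) ^ 2 • (b * a) ∧ b * c = (q⁻¹) ^ 2 • (c * b) ∧
    c * d = (q⁻¹) ^ 2 • (d * c) := by
  have emp : ∀ i : Idx, (i = (0, 0, 1, 1) ∨ i = (0, 1, 1, 0) ∨ i = (1, 1, 0, 0)) →
      Sset i = ∅ := by
    intro i hi
    ext ⟨y3, y2, y1, y0⟩
    simp only [Set.mem_empty_iff_false, iff_false]
    rintro ⟨⟨s, r, h1⟩, hne⟩
    apply hne
    rcases hi with rfl | rfl | rfl <;> simp only [Prod.mk.injEq] at * <;> push_cast at h1 <;> omega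
  have e1 := E_sigma hB (emp (0, 0, 1, 1) (by simp))
  have e2 := E_sigma hB (emp (0, 1, 1, 0) (by simp))
  have e3 := E_sigma hB (emp (1, 1, 0, 0) (by simp))
  simp only [gE, bexp, Nnum] at e1 e2 e3
  norm_num at e1 e2 e3
  rw [h.mul, ha, hb] at e1
  rw [h.mul, hb, hc] at e2
  rw [h.mul, hc, hd] at e3
  refine ⟨rel_of (m := 0) (n := 2) (k := 0) hq rfl ?_, rel_of (m := 2) (n := 4) (k := 4) hq rfl ?_,
    rel_of (m := 4) (n := 6) (k := 8) hq rfl ?_⟩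
  · simpa using e1
  · rw [e2]
  · rw [e3]

section
variable (h : SH q bar σ) (hr : KRel q a b c d)
    (ha : σ a = a) (hb : σ b = q ^ 2 • b) (hc : σ c = q ^ 4 • c) (hd : σ d = q ^ 6 • d)
include h hr ha hb hc hd

theorem sigma_z : σ (gz q a b c d) = q ^ (4 : ℤ) • gz q a b c d := by
  have hq := hr.hq
  rw [gz, h.sub, h.smul, h.mul, h.mul, ha, hb, hc, hd, map_pow, h.bq]
  simp only [smul_mul_assoc, mul_smul_comm, hr.ad, hr.bc]
  match_scalars <;> field_simp <;> ring

theorem sigma_p1 : σ (gp1 q b c d) = q ^ (6 : ℤ) • gp1 q b c d := by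
  have hq := hr.hq
  rw [gp1, h.sub, h.smul, pow_two c, h.mul, h.mul, hb, hc, hd, map_pow, h.bq]
  simp only [smul_mul_assoc, mul_smul_comm, hr.bd]
  match_scalars <;> field_simp <;> ring

theorem sigma_p0 : σ (gp0 q a b c) = q ^ (2 : ℤ) • gp0 q a b c := by
  have hq := hr.hq
  rw [gp0, h.sub, h.smul, pow_two b, h.mul, h.mul, ha, hb, hc, map_pow, h.bq]
  simp only [smul_mul_assoc, mul_smul_comm, hr.ac]
  match_scalars <;> field_simp <;> ring

theorem sigma_f : σ (gf q a b c d) = q ^ (8 : ℤ) • gf q a b c d := by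
  have hq := hr.hq
  have e : gp0 q a b c * gp1 q b c d = q ^ (-4 : ℤ) • (gp1 q b c d * gp0 q a b c) := hr.p0_p1
  rw [gf, h.smul, h.mul, sigma_p1 h hr ha hb hc hd, sigma_p0 h hr ha hb hc hd, map_pow, map_inv₀,
    h.bq]
  simp only [smul_mul_assoc, mul_smul_comm, e]
  match_scalars
  field_simp

theorem sigma_x (n : ℕ) : σ (gx (gz q a b c d) (gf q a b c d) n) =
    q ^ (4 * n : ℤ) • gx (gz q a b c d) (gf q a b c d) n := by
  have hq := hr.hq
  induction n using Nat.twoStepInduction with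
  | zero => simp [gx, h.one]
  | one => simpa [gx] using sigma_z h hr ha hb hc hd
  | more n h1 h2 =>
    rw [gx, h.sub, h.mul, h.mul, h1, h2, sigma_z h hr ha hb hc hd, sigma_f h hr ha hb hc hd]
    simp only [smul_mul_assoc, mul_smul_comm, smul_smul, ← zpow_add₀ hq, smul_sub]
    rw [(hr.x_z (n + 1)).eq, (hr.x_f n).eq]
    congr 1

theorem generic_main (hinj : Function.Injective (Polynomial.eval₂ (Int.castRingHom K) q))
    (hli : LinearIndependent K (gE q a b c d)) (hB : GB q (gE q a b c d) σ B)
    (n : ℕ) (hn : 1 ≤ n) :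
    B (n, 0, 0, n) * B (1, 0, 0, 1)
        = q ^ (-4 * (n : ℤ)) • B (n + 1, 0, 0, n + 1)
          + q ^ (-4 * (n : ℤ)) • B (n, 1, 1, n) ∧
    B (1, 0, 0, 1) * B (n, 0, 0, n)
        = q ^ (-4 * (n : ℤ)) • B (n + 1, 0, 0, n + 1)
          + q ^ (-4 * (n : ℤ)) • B (n, 1, 1, n) ∧
    B (1, 0, 0, 1) * B (n, 0, 0, n) = B (n, 0, 0, n) * B (1, 0, 0, 1) := by
  have hq := hr.hq
  have bx : ∀ k : ℕ, B (k, 0, 0, k) =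
      q ^ (2 * k * (k - 1) : ℤ) • gx (gz q a b c d) (gf q a b c d) k := by
    intro k
    refine B_eq hq hinj hli h hB (hr.good_all k).1 ?_
    rw [h.smul, h.bz, sigma_x h hr ha hb hc hd, smul_smul, smul_smul, ← zpow_add₀ hq,
      ← zpow_add₀ hq]
    exact smul_eq_of hq (by simp only [Nnum]; push_cast; ring)
  have bf : ∀ k : ℕ, B (k + 1, 1, 1, k + 1) =
      q ^ (2 * (k + 2) * (k + 1) : ℤ) •
        (gx (gz q a b c d) (gf q a b c d) k * gf q a b c d) := by
    intro k
    refine B_eq hq hinj hli h hB (hr.good_xf k) ?_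
    rw [h.smul, h.bz, h.mul, sigma_f h hr ha hb hc hd, sigma_x h hr ha hb hc hd, smul_mul_assoc,
      mul_smul_comm, (hr.x_f k).eq]
    simp only [smul_smul, ← zpow_add₀ hq]
    exact smul_eq_of hq (by simp only [Nnum]; push_cast; ring)
  obtain ⟨k, rfl⟩ : ∃ k, n = k + 1 := ⟨n - 1, by omega⟩
  have hz : B (1, 0, 0, 1) = gz q a b c d := by
    rw [bx 1]; simp [gx]
  have main : B (k + 1, 0, 0, k + 1) * B (1, 0, 0, 1)
        = q ^ (-4 * ((k + 1 : ℕ) : ℤ)) • B (k + 1 + 1, 0, 0, k + 1 + 1)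
          + q ^ (-4 * ((k + 1 : ℕ) : ℤ)) • B (k + 1, 1, 1, k + 1) := by
    rw [hz, bx (k + 1), bx (k + 1 + 1), bf k, gx, smul_smul, smul_smul, ← zpow_add₀ hq,
      ← zpow_add₀ hq, smul_sub, smul_mul_assoc]
    have e1 : (-4 * ((k + 1 : ℕ) : ℤ)
        + 2 * ((k + 1 + 1 : ℕ) : ℤ) * (((k + 1 + 1 : ℕ) : ℤ) - 1))
        = 2 * ((k + 1 : ℕ) : ℤ) * (((k + 1 : ℕ) : ℤ) - 1) := by push_cast; ring
    have e2 : (-4 * ((k + 1 : ℕ) : ℤ) + 2 * (k + 2) * (k + 1))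
        = 2 * ((k + 1 : ℕ) : ℤ) * (((k + 1 : ℕ) : ℤ) - 1) := by push_cast; ring
    rw [e1, e2]
    abel
  have comm : B (1, 0, 0, 1) * B (k + 1, 0, 0, k + 1) =
      B (k + 1, 0, 0, k + 1) * B (1, 0, 0, 1) := by
    rw [hz, bx (k + 1), smul_mul_assoc, mul_smul_comm, (hr.x_z (k + 1)).eq]
  exact ⟨main, comm ▸ main, comm⟩

end

end Final

theorem qq_ne : qq ≠ 0 := RatFunc.X_ne_zero

theorem qq_inj : Function.Injective (Polynomial.eval₂ (Int.castRingHom F) qq) := by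
  have e : ∀ P : Polynomial ℤ, Polynomial.eval₂ (Int.castRingHom F) qq P =
      algebraMap (Polynomial ℚ) F (P.map (Int.castRingHom ℚ)) := by
    intro P
    induction P using Polynomial.induction_on' with
    | add P Q h1 h2 => simp [Polynomial.eval₂_add, h1, h2]
    | monomial n r =>
      rw [Polynomial.eval₂_monomial, Polynomial.map_monomial, ← Polynomial.C_mul_X_pow_eq_monomial]
      simp [qq]
  intro P Q h
  rw [e, e] at h
  exact Polynomial.map_injective _ (RingHom.injective_int _)
    (FaithfulSMul.algebraMap_injective (Polynomial ℚ) F h)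

theorem u1_eq : u1 = ((1 - (qq⁻¹) ^ 2)⁻¹) ^ 2 • (Aelt * u0 - u0 * Aelt) := rfl

theorem u2_eq : u2 = ((1 - (qq⁻¹) ^ 2)⁻¹) ^ 2 • (Aelt * u1 - u1 * Aelt) :=
  (der_smul 2 2 _ Aelt v1).symm

theorem u3_eq : u3 = ((1 - (qq⁻¹) ^ 2)⁻¹) ^ 2 • (Aelt * u2 - u2 * Aelt) :=
  (der_smul 2 4 _ Aelt v2).symm

theorem krel_S {bar : F →+* F} {σ : Sgen → Sgen} {B : Idx → Sgen}
    (h : SH qq bar σ) (hB : GB qq (gE qq us0 us1 us2 us3) σ B)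
    (ha : σ us0 = us0) (hb : σ us1 = qq ^ 2 • us1) (hc : σ us2 = qq ^ 4 • us2)
    (hd : σ us3 = qq ^ 6 • us3) : KRel qq us0 us1 us2 us3 := by
  obtain ⟨e1, e2, e3⟩ := three_rel qq_ne h hB ha hb hc hd
  have k : KRel qq u0 u1 u2 u3 := krel_of_der qq_ne u1_eq u2_eq u3_eq
    (congrArg Subtype.val e1) (congrArg Subtype.val e2) (congrArg Subtype.val e3)
  exact ⟨qq_ne, e1, e2, e3, Subtype.ext k.ac, Subtype.ext k.bd, Subtype.ext k.ad⟩

theorem li_E (hPBW : LinearIndependent F mon) :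
    LinearIndependent F (gE qq us0 us1 us2 us3) := by
  have := hPBW.units_smul (fun i => Units.mk0 (qq ^ bexp i) (pow_ne_zero _ qq_ne))
  exact this

/-- For every integer `n ≥ 1` the dual canonical basis elements satisfy
`B[n,0,0,n]·B[1,0,0,1] = q^{−4n} B[n+1,0,0,n+1] + q^{−4n} B[n,1,1,n]` and
`B[1,0,0,1]·B[n,0,0,n] = q^{−4n} B[n+1,0,0,n+1] + q^{−4n} B[n,1,1,n]`; in particular
`B[1,0,0,1]` commutes with `B[n,0,0,n]`. -/
theorem stmt14 (bar : F →+* F) (σ : Sgen → Sgen) (B : Idx → Sgen)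
    (hPBW : LinearIndependent F mon) (hσ : SigmaHyp bar σ) (hB : DCB bar σ B) (n : ℕ) (hn : 1 ≤ n) :
    B (n, 0, 0, n) * B (1, 0, 0, 1)
        = qq ^ (-4 * (n : ℤ)) • B (n + 1, 0, 0, n + 1)
          + qq ^ (-4 * (n : ℤ)) • B (n, 1, 1, n) ∧
    B (1, 0, 0, 1) * B (n, 0, 0, n)
        = qq ^ (-4 * (n : ℤ)) • B (n + 1, 0, 0, n + 1)
          + qq ^ (-4 * (n : ℤ)) • B (n, 1, 1, n) ∧
    B (1, 0, 0, 1) * B (n, 0, 0, n) = B (n, 0, 0, n) * B (1, 0, 0, 1) := by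
  obtain ⟨h1, h2, h3, h4, h5, h6, h7, h8, h9⟩ := hσ
  have h : SH qq bar σ := ⟨h1, h2, h3, h4, h5⟩
  have hB' : GB qq (gE qq us0 us1 us2 us3) σ B := hB
  exact generic_main h (krel_S h hB' h6 h7 h8 h9) h6 h7 h8 h9 qq_inj (li_E hPBW) hB' n hn
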